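/- For h with Re h > 0: ( e^{-2πh} ; e^{-2πh} )_∞ = h^{-1/2} exp( (π/12)(h − 1/h) ) · ( e^{-2π/h} ; e^{-2π/h} )_∞, where the branch of the square root is principal. -/

import Mathlib

open Real

/-!
For `q = e^{-2πh}`, `η(ih) = q^{1/24} ∏ (1 - q^{j+1})`. At `z = ih` the map `h ↦ 1/h` is `z ↦ -1/z`,
so the identity is the transformation law `η(-1/z) = √z / √i · η(z)` with the fractional powers of
`q` collected in the exponential. Splitting `√(ih)` as `√i √h` crosses no branch cut because
`|arg h| < π/2`.
-/

section

open Complex (I arg)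

lemma mul_cpow_of_arg_add_arg_mem_Ioc {z w : ℂ} (hzw : arg z + arg w ∈ Set.Ioc (-π) π) (a : ℂ) :
    (z * w) ^ a = z ^ a * w ^ a := by
  rcases eq_or_ne a 0 with rfl | ha
  · simp
  rcases eq_or_ne z 0 with rfl | hz
  · simp [ha]
  rcases eq_or_ne w 0 with rfl | hw
  · simp [ha]
  rw [Complex.cpow_def_of_ne_zero (mul_ne_zero hz hw), Complex.log_mul hz hw hzw, add_mul,
    Complex.exp_add, ← Complex.cpow_def_of_ne_zero hz, ← Complex.cpow_def_of_ne_zero hw]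

lemma mul_cpow_of_re_nonneg_of_re_pos {z w : ℂ} (hz : 0 ≤ z.re) (hw : 0 < w.re) (a : ℂ) :
    (z * w) ^ a = z ^ a * w ^ a := by
  have arg_z : |arg z| ≤ π / 2 := Complex.abs_arg_le_pi_div_two_iff.mpr hz
  have arg_w : |arg w| < π / 2 := Complex.abs_arg_lt_pi_div_two_iff.mpr (.inl hw)
  rw [abs_le] at arg_z
  rw [abs_lt] at arg_w
  exact mul_cpow_of_arg_add_arg_mem_Ioc ⟨by linarith, by linarith⟩ a

lemma tprod_one_sub_exp_pow_eq_exp_mul_eta (w : ℂ) :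
    ∏' j : ℕ, (1 - Complex.exp (-2 * π * w) ^ (j + 1)) =
      Complex.exp (π / 12 * w) * ModularForm.eta (I * w) := by
  have two_pi_I_mul : 2 * π * I * (I * w) = -2 * π * w := by
    linear_combination 2 * π * w * Complex.I_mul_I
  have exp_mul_qParam : Complex.exp (π / 12 * w) * Function.Periodic.qParam 24 (I * w) = 1 := by
    rw [Function.Periodic.qParam, two_pi_I_mul, ← Complex.exp_add, ← Complex.exp_zero]
    congr 1
    push_cast
    ring
  simp only [ModularForm.eta, ModularForm.eta_q_eq_pow, two_pi_I_mul]
  rw [← mul_assoc, exp_mul_qParam, one_mul]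

lemma eta_I_div_eq_sqrt_mul_eta_I_mul {h : ℂ} (hh : 0 < h.re) :
    ModularForm.eta (I / h) = Complex.sqrt h * ModularForm.eta (I * h) := by
  have neg_one_div_I_mul : -1 / (I * h) = I / h := by
    rw [← div_div, neg_div, one_div, Complex.inv_I, neg_neg]
  have sqrt_I_mul : Complex.sqrt (I * h) = Complex.sqrt I * Complex.sqrt h :=
    mul_cpow_of_re_nonneg_of_re_pos Complex.I_re.ge hh _
  have sqrt_I_ne_zero : Complex.sqrt I ≠ 0 := by simp [Complex.sqrt]
  have I_mul_mem : I * h ∈ UpperHalfPlane.upperHalfPlaneSet := by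
    simpa [UpperHalfPlane.upperHalfPlaneSet] using hh
  calc ModularForm.eta (I / h)
      = (Complex.sqrt I)⁻¹ * (Complex.sqrt (I * h) * ModularForm.eta (I * h)) := by
        simpa [neg_one_div_I_mul] using ModularForm.eta_comp_eq_csqrt_I_inv I_mul_mem
    _ = Complex.sqrt h * ModularForm.eta (I * h) := by
        rw [sqrt_I_mul, mul_assoc, inv_mul_cancel_left₀ sqrt_I_ne_zero]

lemma eta_I_mul_eq_cpow_mul_eta_I_div {h : ℂ} (hh : 0 < h.re) :
    ModularForm.eta (I * h) = h ^ (-(1 / 2) : ℂ) * ModularForm.eta (I / h) := by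
  have h_ne_zero : h ≠ 0 := Complex.ne_zero_of_re_pos hh
  have sqrt_ne_zero : Complex.sqrt h ≠ 0 := by simp [Complex.sqrt, h_ne_zero]
  rw [eta_I_div_eq_sqrt_mul_eta_I_mul hh, Complex.cpow_neg, one_div, ← Complex.sqrt,
    inv_mul_cancel_left₀ sqrt_ne_zero]

end

/-- Modular transformation: for `Re h > 0`,
`(e^{-2πh}; e^{-2πh})_∞ = h^{-1/2} exp((π/12)(h − 1/h)) (e^{-2π/h}; e^{-2π/h})_∞`
with the principal branch of the square root. -/
theorem stmt18 (h : ℂ) (hh : 0 < h.re) :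
    (∏' j : ℕ, (1 - Complex.exp (-2 * Real.pi * h) ^ (j + 1)))
      = h ^ (-(1 / 2) : ℂ) * Complex.exp ((Real.pi / 12) * (h - 1 / h))
        * ∏' j : ℕ, (1 - Complex.exp (-2 * Real.pi / h) ^ (j + 1)) := by
  have exp_eq : Complex.exp (π / 12 * h) =
      Complex.exp (π / 12 * (h - 1 / h)) * Complex.exp (π / 12 * h⁻¹) := by
    rw [← Complex.exp_add]
    ring_nf
  calc ∏' j : ℕ, (1 - Complex.exp (-2 * π * h) ^ (j + 1))
      = Complex.exp (π / 12 * h) * ModularForm.eta (Complex.I * h) :=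
        tprod_one_sub_exp_pow_eq_exp_mul_eta h
    _ = Complex.exp (π / 12 * h) *
          (h ^ (-(1 / 2) : ℂ) * ModularForm.eta (Complex.I * h⁻¹)) := by
        rw [eta_I_mul_eq_cpow_mul_eta_I_div hh, div_eq_mul_inv Complex.I]
    _ = h ^ (-(1 / 2) : ℂ) * Complex.exp (π / 12 * (h - 1 / h)) *
          (Complex.exp (π / 12 * h⁻¹) * ModularForm.eta (Complex.I * h⁻¹)) := by
        rw [exp_eq]
        ring
    _ = h ^ (-(1 / 2) : ℂ) * Complex.exp (π / 12 * (h - 1 / h)) *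
          ∏' j : ℕ, (1 - Complex.exp (-2 * π / h) ^ (j + 1)) := by
        rw [← tprod_one_sub_exp_pow_eq_exp_mul_eta, div_eq_mul_inv (-2 * (π : ℂ))]
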